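/- arXiv:1511.04538 — 2 statements merged into one kernel-verified Lean document; each statement's English description precedes it below -/
import Mathlib

section
/- The quotient group (ℤ/Nℤ)² / Ā((ℤ/Nℤ)²) has cardinality |det A|. -/
/-- The additive group homomorphism on `(ℤ/Nℤ)²` induced by matrix–vector
multiplication (mod `N`) by an integer matrix `M`. -/
def matBarHom (N : ℕ) (M : Matrix (Fin 2) (Fin 2) ℤ) :
    (Fin 2 → ZMod N) →+ (Fin 2 → ZMod N) :=
  (Matrix.mulVecLin (M.map (Int.cast : ℤ → ZMod N))).toAddMonoidHom

/-!
Since `A * B = N`, the lattice `A ℤⁿ` contains `N ℤⁿ`, the kernel of reduction modulo `N`.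
Hence its image under reduction, which is the range of `A` modulo `N`, has the same index as
`A ℤⁿ` itself, and the latter index is `|det A|`.
-/

theorem card_quotient_range_eq_natAbs_det {M : Type*} [AddCommGroup M] [Module.Free ℤ M]
    [Module.Finite ℤ M] (f : M →ₗ[ℤ] M) (hf : Function.Injective f) :
    Nat.card (M ⧸ f.range) = (LinearMap.det f).natAbs :=
  (Submodule.natAbs_det_equiv f.range (LinearEquiv.ofInjective f hf)).symm

theorem index_range_mulVecLin {n : Type*} [Fintype n] [DecidableEq n] (A : Matrix n n ℤ)
    (hA : A.det ≠ 0) : A.mulVecLin.toAddMonoidHom.range.index = A.det.natAbs := by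
  rw [← LinearMap.det_toLin']
  exact card_quotient_range_eq_natAbs_det A.mulVecLin (Matrix.mulVec_injective_of_det_ne_zero hA)

section Reduction

variable {R S m n : Type*} [CommRing R] [CommRing S] [Fintype n]

theorem range_mulVecLin_map (f : R →+* S) (hf : Function.Surjective f) (A : Matrix m n R) :
    (A.map f).mulVecLin.toAddMonoidHom.range =
      A.mulVecLin.toAddMonoidHom.range.map ((f : R →+ S).compLeft m) := by
  have hcomm : (A.map f).mulVecLin.toAddMonoidHom.comp ((f : R →+ S).compLeft n) =
      ((f : R →+ S).compLeft m).comp A.mulVecLin.toAddMonoidHom :=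
    AddMonoidHom.ext fun w => funext fun i => (f.map_mulVec A w i).symm
  have hrange : ((f : R →+ S).compLeft n).range = ⊤ :=
    AddMonoidHom.range_eq_top.mpr hf.comp_left
  rw [AddMonoidHom.map_range, ← hcomm, ← AddMonoidHom.map_range, hrange,
    AddMonoidHom.range_eq_map]

theorem ker_compLeft_le_range_mulVecLin [Finite m] [DecidableEq m] {f : R →+* S} {c : R}
    (hf : RingHom.ker f ≤ Ideal.span {c}) {A : Matrix m n R} {B : Matrix n m R}
    (hAB : A * B = c • (1 : Matrix m m R)) :
    ((f : R →+ S).compLeft m).ker ≤ A.mulVecLin.toAddMonoidHom.range := by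
  cases nonempty_fintype m
  intro v hv
  have hdvd (i : m) : c ∣ v i := Ideal.mem_span_singleton.mp (hf (congrFun hv i))
  choose u hu using hdvd
  refine ⟨B.mulVec u, ?_⟩
  calc A.mulVec (B.mulVec u) = c • u := by
        rw [Matrix.mulVec_mulVec, hAB, Matrix.smul_mulVec, Matrix.one_mulVec]
    _ = v := (funext hu).symm

end Reduction

theorem card_quotient_Abar_general {n : Type*} [Fintype n] [DecidableEq n] (N : ℕ)
    (A B : Matrix n n ℤ) (hA : A.det ≠ 0) (hB : A * B = (N : ℤ) • (1 : Matrix n n ℤ)) :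
    Nat.card ((n → ZMod N) ⧸
      (A.map (Int.cast : ℤ → ZMod N)).mulVecLin.toAddMonoidHom.range) = A.det.natAbs := by
  let f := Int.castRingHom (ZMod N)
  have hf : Function.Surjective f := ZMod.intCast_surjective
  have hker : RingHom.ker f ≤ Ideal.span {(N : ℤ)} := (ZMod.ker_intCastRingHom N).le
  calc (A.map f).mulVecLin.toAddMonoidHom.range.index
      = (A.mulVecLin.toAddMonoidHom.range.map ((f : ℤ →+ ZMod N).compLeft n)).index := by
        rw [range_mulVecLin_map f hf]
    _ = A.mulVecLin.toAddMonoidHom.range.index :=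
        AddSubgroup.index_map_eq _ hf.comp_left (ker_compLeft_le_range_mulVecLin hker hB)
    _ = A.det.natAbs := index_range_mulVecLin A hA

/-- Let `N` be a positive integer and `A` an invertible `2×2` real matrix with integer
entries (encoded as an integer matrix with nonzero determinant) such that `B := N·A⁻¹`
also has integer entries (encoded as `A * B = N • 1`).  Then the quotient group
`(ℤ/Nℤ)² / Ā((ℤ/Nℤ)²)` has cardinality `|det A|`. -/
theorem card_quotient_Abar (N : ℕ) (hN : 0 < N) (A B : Matrix (Fin 2) (Fin 2) ℤ)
    (hA : A.det ≠ 0) (hB : A * B = (N : ℤ) • (1 : Matrix (Fin 2) (Fin 2) ℤ)) :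
    Nat.card ((Fin 2 → ZMod N) ⧸ (matBarHom N A).range) = A.det.natAbs :=
  card_quotient_Abar_general N A B hA hB
end

section
/- Let 𝔇 be a digit set for B and 𝔇* a digit set for C. For each k ∈ 𝔇 define E_k : 𝔇* → ℂ by E_k(m) = (1/√|𝔇*|)·e^{2πi⟨m, Ak⟩/N} (with m, k represented by any integer lifts; the value is well defined). Then the family {E_k}_{k ∈ 𝔇} is an orthonormal basis of the complex inner product space of functions 𝔇* → ℂ with inner product ⟨f,g⟩ = Σ_{m∈𝔇*} f(m)·conj(g(m)). -/
/-- The map on `(ℤ/Nℤ)²` induced by matrix–vector multiplication (mod `N`)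
by an integer matrix `M`. -/
def matBar (N : ℕ) (M : Matrix (Fin 2) (Fin 2) ℤ) :
    (Fin 2 → ZMod N) → (Fin 2 → ZMod N) :=
  fun v => (M.map (Int.cast : ℤ → ZMod N)).mulVec v

/-- `D` is a set of coset representatives for `B̄((ℤ/Nℤ)²)` in `(ℤ/Nℤ)²`
containing `0`: it contains exactly one representative of each coset. -/
def IsDigitRep (N : ℕ) (B : Matrix (Fin 2) (Fin 2) ℤ)
    (D : Finset (Fin 2 → ZMod N)) : Prop :=
  (0 : Fin 2 → ZMod N) ∈ D ∧
    ∀ v : Fin 2 → ZMod N, ∃! d, d ∈ D ∧ v - d ∈ Set.range (matBar N B)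

/-- The value `e^{2πi⟨m, Ak⟩/N}`, computed with integer lifts of `m` and `k`
(it is well defined since `A` has integer entries). -/
noncomputable def expChar (N : ℕ) (A : Matrix (Fin 2) (Fin 2) ℤ)
    (m k : Fin 2 → ZMod N) : ℂ :=
  Complex.exp (2 * Real.pi * Complex.I *
    ((∑ i, ((m i).val : ℤ) * A.mulVec (fun j => ((k j).val : ℤ)) i : ℤ) : ℂ) / (N : ℂ))

/-!
The pairing `(k, m) ↦ ⟨m, Ak⟩` on `(ℤ/Nℤ)ⁿ` has left kernel `ker Ā = im B̄` and right kernel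
`ker Āᵀ = im B̄ᵀ`, because `AB = BA = N`. It therefore descends to a nondegenerate pairing of the
two quotient groups that `𝔇` and `𝔇*` represent. Distinct `k ∈ 𝔇` thus give distinct characters
of the second quotient, and these are orthogonal. As orthogonal families are linearly independent,
`|𝔇| ≤ |𝔇*|`; exchanging the two sides of the pairing gives equality, so the characters span.
-/

open AddSubgroup Matrix

section Transversal

variable {G : Type*} [AddGroup G]

theorem injOn_of_isComplement_ker {M : Type*} [AddZeroClass M] {φ : G →+ M} {D : Set G}
    (hD : IsComplement D φ.ker) : Set.InjOn φ D := by
  intro k hk l hl hkl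
  have hmem : -k + l ∈ φ.ker := by
    rw [AddMonoidHom.mem_ker, map_add, ← hkl, ← map_add, neg_add_cancel, map_zero]
  have hmem_self : -l + l ∈ φ.ker := by simp only [neg_add_cancel, zero_mem]
  exact congrArg Subtype.val <| (isComplement_iff_existsUnique_neg_add_mem.mp hD l).unique
    (y₁ := ⟨k, hk⟩) (y₂ := ⟨l, hl⟩) hmem hmem_self

theorem sum_addChar_eq_zero_of_isComplement {R : Type*} [CommSemiring R] [IsDomain R]
    {L : AddSubgroup G} [L.Normal] {D : Finset G} (hD : IsComplement (D : Set G) L)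
    {χ : AddChar G R} (hL : ∀ g ∈ L, χ g = 1) (hχ : χ ≠ 0) :
    ∑ d ∈ D, χ d = 0 := by
  have : Finite (G ⧸ L) := .of_equiv _ hD.leftQuotientEquiv.symm
  have := Fintype.ofFinite (G ⧸ L)
  let χL : AddChar (G ⧸ L) R :=
    AddChar.toAddMonoidHomEquiv.symm (QuotientAddGroup.lift L χ.toAddMonoidHom hL)
  have hχL : χL ≠ 0 := fun h ↦ hχ <| DFunLike.ext χ 0 fun g ↦ DFunLike.congr_fun h (g : G ⧸ L)
  calc ∑ d ∈ D, χ d = ∑ d : D, χL (d : G) := (Finset.sum_coe_sort D χ).symm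
    _ = ∑ q, χL q := hD.leftQuotientEquiv.symm.sum_comp χL
    _ = 0 := by classical rw [AddChar.sum_eq_ite, if_neg hχL]

end Transversal

theorem linearIndependent_of_dotProduct_star_eq_zero {κ ι 𝕜 : Type*} [RCLike 𝕜] [Fintype ι]
    {f : κ → ι → 𝕜} (hne : ∀ k, f k ≠ 0) (hf : Pairwise fun k l ↦ f k ⬝ᵥ star (f l) = 0) :
    LinearIndependent 𝕜 f := by
  have horth : LinearIndependent 𝕜 fun k ↦ WithLp.toLp 2 (f k) :=
    linearIndependent_of_ne_zero_of_inner_eq_zero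
      (fun k ↦ (WithLp.toLp_eq_zero 2).not.mpr (hne k)) fun k l hkl ↦ hf hkl.symm
  exact horth.map' (WithLp.linearEquiv 2 𝕜 (ι → 𝕜)).toLinearMap (LinearEquiv.ker _)

section Pairing

variable {G H R : Type*} [AddCommGroup G] [AddCommGroup H] [AddCommGroup R]
  {β : G →+ H →+ R} {ψ : AddChar R Circle} {D : Finset G} {Dstar : Finset H}

theorem sum_circle_pairing_eq_zero (hψ : Function.Injective ψ)
    (hDstar : IsComplement (Dstar : Set H) β.flip.ker) {g : G} (hg : β g ≠ 0) :
    ∑ m ∈ Dstar, (ψ (β g m) : ℂ) = 0 := by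
  let χ : AddChar H ℂ := Circle.coeHom.compAddChar (ψ.compAddMonoidHom (β g))
  have hχ (m : H) : χ m = 1 ↔ β g m = 0 := by
    rw [← hψ.eq_iff, ψ.map_zero_eq_one]
    exact Circle.coe_eq_one
  have htriv : ∀ m ∈ β.flip.ker, χ m = 1 := fun m hm ↦ (hχ m).mpr (DFunLike.congr_fun hm g)
  have hne : χ ≠ 0 := fun h ↦ hg <| AddMonoidHom.ext fun m ↦ (hχ m).mp (DFunLike.congr_fun h m)
  exact sum_addChar_eq_zero_of_isComplement hDstar htriv hne

theorem sum_circle_pairing_mul_conj (hψ : Function.Injective ψ)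
    (hD : IsComplement (D : Set G) β.ker) (hDstar : IsComplement (Dstar : Set H) β.flip.ker)
    (k l : D) [Decidable (k = l)] :
    ∑ m : Dstar, (ψ (β k m) : ℂ) * (starRingEnd ℂ) (ψ (β l m)) =
      if k = l then (Dstar.card : ℂ) else 0 := by
  have hterm (m : H) :
      (ψ (β k m) : ℂ) * (starRingEnd ℂ) (ψ (β l m)) = ψ (β (k - l : G) m) := by
    rw [map_sub, AddMonoidHom.sub_apply, AddChar.map_sub_eq_div, Circle.coe_div, div_eq_mul_inv,
      ← Circle.coe_inv, Circle.coe_inv_eq_conj]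
  simp only [hterm, Finset.sum_coe_sort Dstar fun m ↦ (ψ (β (k - l : G) m) : ℂ)]
  split_ifs with hkl
  · simp [hkl]
  · refine sum_circle_pairing_eq_zero hψ hDstar fun h ↦ hkl (Subtype.ext ?_)
    exact injOn_of_isComplement_ker hD k.2 l.2 (sub_eq_zero.mp (by rwa [← map_sub]))

theorem linearIndependent_circle_pairing (hψ : Function.Injective ψ)
    (hD : IsComplement (D : Set G) β.ker) (hDstar : IsComplement (Dstar : Set H) β.flip.ker) :
    LinearIndependent ℂ fun (k : D) (m : Dstar) ↦ (ψ (β k m) : ℂ) := by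
  classical
  obtain ⟨m, hm⟩ := hDstar.nonempty_left
  refine linearIndependent_of_dotProduct_star_eq_zero
    (fun k h ↦ Circle.coe_ne_zero _ (congrFun h ⟨m, hm⟩)) fun k l hkl ↦ ?_
  exact (sum_circle_pairing_mul_conj hψ hD hDstar k l).trans (if_neg hkl)

theorem card_le_card_of_isComplement_ker (hψ : Function.Injective ψ)
    (hD : IsComplement (D : Set G) β.ker) (hDstar : IsComplement (Dstar : Set H) β.flip.ker) :
    D.card ≤ Dstar.card := by
  simpa using (linearIndependent_circle_pairing hψ hD hDstar).fintype_card_le_finrank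

theorem span_range_circle_pairing (hψ : Function.Injective ψ)
    (hD : IsComplement (D : Set G) β.ker) (hDstar : IsComplement (Dstar : Set H) β.flip.ker) :
    Submodule.span ℂ (Set.range fun (k : D) (m : Dstar) ↦ (ψ (β k m) : ℂ)) = ⊤ := by
  have hcard : D.card = Dstar.card :=
    (card_le_card_of_isComplement_ker hψ hD hDstar).antisymm
      (card_le_card_of_isComplement_ker (β := β.flip) hψ hDstar hD)
  refine (linearIndependent_circle_pairing hψ hD hDstar).span_eq_top_of_card_eq_finrank' ?_
  simpa using hcard

open scoped Pointwise in
theorem orthonormal_and_span_circle_pairing [DecidableEq G] (hψ : Function.Injective ψ)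
    (hD : IsComplement (D : Set G) β.ker) (hDstar : IsComplement (Dstar : Set H) β.flip.ker)
    {E : D → Dstar → ℂ}
    (hE : ∀ k m, E k m = (1 / Real.sqrt Dstar.card : ℂ) * ψ (β k m)) :
    (∀ k l, ∑ m, E k m * (starRingEnd ℂ) (E l m) = if k = l then 1 else 0) ∧
      Submodule.span ℂ (Set.range E) = ⊤ := by
  have hcard : (Dstar.card : ℂ) ≠ 0 :=
    Nat.cast_ne_zero.mpr (Finset.card_ne_zero.mpr hDstar.nonempty_left)
  have hsqrt : ((Real.sqrt Dstar.card : ℝ) : ℂ) * (Real.sqrt Dstar.card : ℝ) = Dstar.card := by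
    rw [← Complex.ofReal_mul, Real.mul_self_sqrt (Nat.cast_nonneg _), Complex.ofReal_natCast]
  have hsqrt_ne : ((Real.sqrt Dstar.card : ℝ) : ℂ) ≠ 0 := left_ne_zero_of_mul (hsqrt ▸ hcard)
  constructor
  · intro k l
    have hterm (m : Dstar) : E k m * (starRingEnd ℂ) (E l m) =
        (Dstar.card : ℂ)⁻¹ * ((ψ (β k m) : ℂ) * (starRingEnd ℂ) (ψ (β l m))) := by
      rw [hE, hE, map_mul, map_div₀, map_one, Complex.conj_ofReal, ← hsqrt]
      field_simp
    simp only [hterm, ← Finset.mul_sum, sum_circle_pairing_mul_conj hψ hD hDstar]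
    rw [mul_ite, inv_mul_cancel₀ hcard, mul_zero]
  · have hrange : Set.range E = (1 / Real.sqrt Dstar.card : ℂ) •
        Set.range fun (k : D) (m : Dstar) ↦ (ψ (β k m) : ℂ) := by
      rw [Set.smul_set_range]
      exact congrArg Set.range (funext₂ hE)
    rw [hrange, Submodule.span_smul_eq_of_isUnit _ _ (one_div_ne_zero hsqrt_ne).isUnit,
      span_range_circle_pairing hψ hD hDstar]

end Pairing

section MatrixFactorization

variable {ι R : Type*} [Fintype ι] [DecidableEq ι] [CommRing R] {A B : Matrix ι ι R} {c : R}

theorem mul_eq_smul_one_symm (hc : IsLeftRegular c) (h : A * B = c • (1 : Matrix ι ι R)) :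
    B * A = c • (1 : Matrix ι ι R) := by
  have hdet : IsLeftRegular A.det := by
    refine .of_mul (a := B.det) ?_
    rw [mul_comm, ← det_mul, h, det_smul, det_one, mul_one]
    exact hc.pow _
  refine (isRegular_of_isLeftRegular_det hdet).left ?_
  calc A * (B * A) = c • A := by rw [← Matrix.mul_assoc, h, smul_mul, Matrix.one_mul]
    _ = A * (c • (1 : Matrix ι ι R)) := by rw [Matrix.mul_smul, Matrix.mul_one]

theorem range_mulVec_map_eq_ker {S : Type*} [CommRing S] {f : R →+* S}
    (hf : Function.Surjective f) (hker : RingHom.ker f = Ideal.span {c}) (hc : IsLeftRegular c)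
    (h : A * B = c • (1 : Matrix ι ι R)) :
    Set.range (A.map f).mulVec = {v | B.map f *ᵥ v = 0} := by
  have hfc : f c = 0 := by
    rw [← RingHom.mem_ker, hker]
    exact Ideal.mem_span_singleton_self c
  have map_mulVec_eq (M : Matrix ι ι R) (x : ι → R) : M.map f *ᵥ (f ∘ x) = f ∘ (M *ᵥ x) :=
    funext fun i ↦ (f.map_mulVec M x i).symm
  ext v
  constructor
  · rintro ⟨v, rfl⟩
    have hBA : B.map f * A.map f = 0 := by
      rw [← Matrix.map_mul, mul_eq_smul_one_symm hc h]
      ext i j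
      simp [hfc]
    rw [Set.mem_ofPred_eq, mulVec_mulVec, hBA, zero_mulVec]
  · intro hv
    obtain ⟨x, rfl⟩ := hf.comp_left v
    have hdvd (i : ι) : c ∣ (B *ᵥ x) i := by
      rw [← Ideal.mem_span_singleton, ← hker, RingHom.mem_ker, f.map_mulVec]
      exact congrFun hv i
    choose w hw using hdvd
    have hx : c • (A *ᵥ w) = c • x := by
      rw [← mulVec_smul, ← (funext hw : B *ᵥ x = c • w), mulVec_mulVec, h, smul_mulVec,
        one_mulVec]
    refine ⟨f ∘ w, ?_⟩
    rw [map_mulVec_eq, show A *ᵥ w = x from funext fun i ↦ hc (congrFun hx i)]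

end MatrixFactorization

section ModN

variable {ι : Type*} [Fintype ι] {N : ℕ}

/-- The pairing `(k, m) ↦ ⟨m, Ak⟩` on `(ℤ/Nℤ)^ι`. It is bundled with `k` as first argument, so
that its left kernel is `ker Ā` and its right kernel is `ker Āᵀ`. -/
def matPairing (N : ℕ) (A : Matrix ι ι ℤ) : (ι → ZMod N) →+ (ι → ZMod N) →+ ZMod N :=
  AddMonoidHom.mk' (fun k ↦ AddMonoidHom.mk' (fun m ↦ m ⬝ᵥ A.map Int.cast *ᵥ k)
    fun m₁ m₂ ↦ add_dotProduct m₁ m₂ _)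
    fun k₁ k₂ ↦ AddMonoidHom.ext fun m ↦ by simp [mulVec_add, dotProduct_add]

theorem matPairing_apply (A : Matrix ι ι ℤ) (k m : ι → ZMod N) :
    matPairing N A k m = m ⬝ᵥ A.map Int.cast *ᵥ k := rfl

theorem flip_matPairing (A : Matrix ι ι ℤ) : (matPairing N A).flip = matPairing N Aᵀ := by
  ext m k
  simp only [AddMonoidHom.flip_apply, matPairing_apply]
  rw [transpose_map, mulVec_transpose, dotProduct_mulVec, dotProduct_comm]

theorem mem_ker_matPairing {A : Matrix ι ι ℤ} {k : ι → ZMod N} :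
    k ∈ (matPairing N A).ker ↔ A.map Int.cast *ᵥ k = 0 := by
  rw [AddMonoidHom.mem_ker, ← dotProduct_eq_zero_iff, DFunLike.ext_iff]
  simp only [matPairing_apply, AddMonoidHom.zero_apply, dotProduct_comm]

variable [DecidableEq ι] {A B : Matrix ι ι ℤ}

theorem range_mulVec_eq_ker_matPairing [NeZero N] (h : A * B = (N : ℤ) • (1 : Matrix ι ι ℤ)) :
    Set.range (A.map (Int.cast : ℤ → ZMod N)).mulVec = (matPairing N B).ker := by
  refine (range_mulVec_map_eq_ker (f := Int.castRingHom (ZMod N)) ZMod.intCast_surjective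
    (ZMod.ker_intCastRingHom N) (IsRegular.of_ne_zero (NeZero.ne _)).left h).trans ?_
  exact Set.ext fun v ↦ mem_ker_matPairing.symm

theorem exp_family_onb_general [NeZero N] (hAB : A * B = (N : ℤ) • (1 : Matrix ι ι ℤ))
    {D Dstar : Finset (ι → ZMod N)}
    (hD : IsComplement (D : Set (ι → ZMod N)) (Set.range (B.map Int.cast).mulVec))
    (hDstar : IsComplement (Dstar : Set (ι → ZMod N)) (Set.range (Bᵀ.map Int.cast).mulVec))
    {E : D → Dstar → ℂ}
    (hE : ∀ (k : D) (m : Dstar), E k m =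
      (1 / Real.sqrt Dstar.card : ℂ) * ZMod.stdAddChar (m.1 ⬝ᵥ A.map Int.cast *ᵥ k.1)) :
    (∀ k₁ k₂ : D, ∑ m : Dstar, E k₁ m * (starRingEnd ℂ) (E k₂ m) = if k₁ = k₂ then 1 else 0) ∧
      Submodule.span ℂ (Set.range E) = ⊤ := by
  have hBA : B * A = (N : ℤ) • (1 : Matrix ι ι ℤ) :=
    mul_eq_smul_one_symm (IsRegular.of_ne_zero (NeZero.ne _)).left hAB
  have hBAt : Bᵀ * Aᵀ = (N : ℤ) • (1 : Matrix ι ι ℤ) := by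
    rw [← transpose_mul, hAB, transpose_smul, transpose_one]
  rw [range_mulVec_eq_ker_matPairing hBA] at hD
  rw [range_mulVec_eq_ker_matPairing hBAt, ← flip_matPairing] at hDstar
  exact orthonormal_and_span_circle_pairing ZMod.injective_toCircle hD hDstar hE

end ModN

theorem expChar_eq_stdAddChar {N : ℕ} [NeZero N] (A : Matrix (Fin 2) (Fin 2) ℤ)
    (m k : Fin 2 → ZMod N) : expChar N A m k = ZMod.stdAddChar (m ⬝ᵥ matBar N A k) := by
  rw [expChar, ← ZMod.stdAddChar_coe]
  congr 1
  simp [matBar, mulVec, dotProduct]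

theorem IsDigitRep.isComplement {N : ℕ} {B : Matrix (Fin 2) (Fin 2) ℤ}
    {D : Finset (Fin 2 → ZMod N)} (hD : IsDigitRep N B D) :
    IsComplement (D : Set (Fin 2 → ZMod N)) (Set.range (matBar N B)) := by
  refine isComplement_iff_existsUnique_neg_add_mem.mpr fun v ↦ ?_
  obtain ⟨d, ⟨hdD, hd⟩, huniq⟩ := hD.2 v
  simp only [neg_add_eq_sub]
  exact ⟨⟨d, hdD⟩, hd, fun e he ↦ Subtype.ext (huniq e ⟨e.2, he⟩)⟩

/-- Let `𝔇` be a digit set for `B` and `𝔇*` a digit set for `C = Bᵀ`.  For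
`k ∈ 𝔇`, define `E_k : 𝔇* → ℂ` by `E_k(m) = (1/√|𝔇*|)·e^{2πi⟨m, Ak⟩/N}`.  Then
`{E_k}_{k ∈ 𝔇}` is an orthonormal basis of the space of functions `𝔇* → ℂ`
with inner product `⟨f, g⟩ = Σ_{m ∈ 𝔇*} f(m)·conj(g(m))`: the family is
orthonormal and spans the whole space. -/
theorem exp_family_onb (N : ℕ) (hN : 0 < N) (A B : Matrix (Fin 2) (Fin 2) ℤ)
    (hA : A.det ≠ 0) (hB : A * B = (N : ℤ) • (1 : Matrix (Fin 2) (Fin 2) ℤ))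
    (D : Finset (Fin 2 → ZMod N)) (hD : IsDigitRep N B D)
    (hinj : Set.InjOn (matBar N A) D)
    (Dstar : Finset (Fin 2 → ZMod N)) (hDstar : IsDigitRep N B.transpose Dstar)
    (E : ↥D → (↥Dstar → ℂ))
    (hE : ∀ (k : ↥D) (m : ↥Dstar),
      E k m = (1 / Real.sqrt Dstar.card : ℂ) * expChar N A (↑m) (↑k)) :
    (∀ k₁ k₂ : ↥D, ∑ m : ↥Dstar, E k₁ m * (starRingEnd ℂ) (E k₂ m) =
        if k₁ = k₂ then 1 else 0) ∧
    Submodule.span ℂ (Set.range E) = ⊤ := by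
  have : NeZero N := ⟨hN.ne'⟩
  exact exp_family_onb_general hB hD.isComplement hDstar.isComplement fun k m ↦ by
    rw [hE, expChar_eq_stdAddChar, matBar]
end
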